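/- Incidence criterion for strong Euler homogeneity: With notation as in the context, D is strongly Euler homogeneous at p if and only if every vector y ∈ ℂ^{n+1} satisfying ∑_{i=0}^n a_i(p)·y_i = 0 for all a ∈ K also satisfies ∑_{i=0}^n p_i·y_i = 0 (i.e. the fiber over p of the scheme Z_f cut out by the Jacobian syzygies is contained in the incidence variety I = V(∑ x_i y_i)). -/

import Mathlib

open MvPolynomial

noncomputable section

/-- The Jacobian syzygy module `K` of `f`, as a set:
tuples `a = (a_0, …, a_n)` of polynomials with `∑ a_i ∂f/∂x_i = 0`. -/
def syzSet (n : ℕ) (f : MvPolynomial (Fin (n + 1)) ℂ) :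
    Set (Fin (n + 1) → MvPolynomial (Fin (n + 1)) ℂ) :=
  {a | ∑ i, a i * pderiv i f = 0}

/-- The image of the syzygy module under coordinatewise evaluation at `p`. -/
def evSyz (n : ℕ) (f : MvPolynomial (Fin (n + 1)) ℂ) (p : Fin (n + 1) → ℂ) :
    Set (Fin (n + 1) → ℂ) :=
  (fun a => fun i => eval p (a i)) '' syzSet n f

/-- The syzygy rank `rk M'_f(p)`. -/
def syzRank (n : ℕ) (f : MvPolynomial (Fin (n + 1)) ℂ) (p : Fin (n + 1) → ℂ) : ℕ :=
  Module.finrank ℂ (Submodule.span ℂ (evSyz n f p))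

/-- The augmented syzygy rank `rk M_f(p)`. -/
def augSyzRank (n : ℕ) (f : MvPolynomial (Fin (n + 1)) ℂ) (p : Fin (n + 1) → ℂ) : ℕ :=
  Module.finrank ℂ (Submodule.span ℂ (evSyz n f p ∪ {p}))

/-- The dehomogenization `g(y_1,…,y_n) = f(1,y_1,…,y_n)`. -/
def dehom (n : ℕ) (f : MvPolynomial (Fin (n + 1)) ℂ) : MvPolynomial (Fin n) ℂ :=
  aeval (Fin.cons (1 : MvPolynomial (Fin n) ℂ) fun i => X i) f

/-- `D = V(f)` is strongly Euler homogeneous at `p` (with `p_0 = 1`): there exist an open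
neighborhood `U` of `q = (p_1,…,p_n)` and analytic functions `a_i` on `U` vanishing at `q`
with `g = ∑ a_i ∂g/∂y_i` on `U`, where `g` is the dehomogenization of `f`. -/
def StronglyEulerHomogeneousAt (n : ℕ) (f : MvPolynomial (Fin (n + 1)) ℂ)
    (p : Fin (n + 1) → ℂ) : Prop :=
  ∃ (U : Set (Fin n → ℂ)) (a : Fin n → (Fin n → ℂ) → ℂ),
    IsOpen U ∧ (fun i => p i.succ) ∈ U ∧
    (∀ i, ∀ y ∈ U, AnalyticAt ℂ (a i) y) ∧
    (∀ i, a i (fun j => p j.succ) = 0) ∧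
    ∀ y ∈ U,
      eval y (dehom n f) = ∑ i, a i y * eval y (pderiv i (dehom n f))

/-!
Strong Euler homogeneity at `p` and the fiber condition are both equivalent to the existence of a
Jacobian syzygy with value `p` at `p`. For the fiber condition this is duality in `ℂⁿ⁺¹`. For the
other one, write `g` for the dehomogenization of `f`. By Euler's identity, pairing a vector `c` with
the gradient of `f` at `(1, y)` gives `c₀ d g(y) + ∑ (cᵢ - c₀ yᵢ) ∂ᵢg(y)`, so a syzygy `a` with
`a(p) = p` gives `g = ∑ d⁻¹ (yᵢ - aᵢ / a₀) ∂ᵢg` near `p`. Conversely `g = ∑ bᵢ ∂ᵢg` gives a syzygy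
`(1, yᵢ - d bᵢ)` with value `p` at `p`, whose coefficients are only analytic. Its truncation at a
high order is a polynomial syzygy up to an error in a high power of the maximal ideal of `p`; by the
Artin–Rees lemma this error is cancelled by a correction vanishing at `p`.
-/

open Filter Topology Asymptotics

section HomogeneousComponents

variable {σ R : Type*} [CommSemiring R]

theorem aeval_smul_of_isHomogeneous {A : Type*} [CommSemiring A] [Algebra R A]
    {f : MvPolynomial σ R} {d : ℕ} (hf : f.IsHomogeneous d) (c : A) (v : σ → A) :
    aeval (c • v) f = c ^ d * aeval v f := by
  rw [aeval_def, aeval_def, eval₂_eq, eval₂_eq, Finset.mul_sum]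
  refine Finset.sum_congr rfl fun s hs => ?_
  have hs_degree : ∑ i ∈ s.support, s i = d := by
    rw [← Finsupp.degree_apply, Finsupp.degree_eq_weight_one]
    exact hf (mem_support_iff.mp hs)
  simp only [Pi.smul_apply, smul_eq_mul, mul_pow, Finset.prod_mul_distrib,
    Finset.prod_pow_eq_pow_sum, hs_degree]
  ring

theorem coeff_aeval_X_smul_C (P : MvPolynomial σ R) (v : σ → R) (k : ℕ) :
    (aeval ((Polynomial.X : Polynomial R) • fun i => Polynomial.C (v i)) P).coeff k =
      eval v (homogeneousComponent k P) := by
  have aeval_C (G : MvPolynomial σ R) :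
      aeval (fun i => Polynomial.C (v i)) G = Polynomial.C (eval v G) :=
    (comp_aeval_apply (B := Polynomial R) v Polynomial.CAlgHom G).symm
  conv_lhs => rw [← sum_homogeneousComponent P]
  simp only [map_sum, Polynomial.finsetSum_coeff, aeval_C, Polynomial.coeff_X_pow_mul',
    aeval_smul_of_isHomogeneous (homogeneousComponent_isHomogeneous _ P)]
  rw [Finset.sum_eq_single k]
  · simp
  · intro j _ hj
    split_ifs with hjk
    · exact Polynomial.coeff_C_of_ne_zero (by omega)
    · rfl
  · intro hk
    simp [homogeneousComponent_eq_zero k P (by simpa using hk)]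

end HomogeneousComponents

section Translation

variable {σ R : Type*} [CommRing R]

/-- The substitution `G(x) ↦ G(x + p)`, as an automorphism of the polynomial algebra; it moves
questions at the point `p` to the origin. -/
def translateAlgEquiv (p : σ → R) : MvPolynomial σ R ≃ₐ[R] MvPolynomial σ R :=
  AlgEquiv.ofAlgHom (aeval fun i => X i + C (p i)) (aeval fun i => X i - C (p i))
    (by ext i : 1; simp [← algebraMap_eq]) (by ext i : 1; simp [← algebraMap_eq])

@[simp]
theorem eval_translateAlgEquiv (p y : σ → R) (G : MvPolynomial σ R) :
    eval y (translateAlgEquiv p G) = eval (y + p) G := by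
  have := comp_aeval_apply (fun i => X i + C (p i)) (aeval (R := R) y) G
  simpa [translateAlgEquiv, aeval_eq_eval, Pi.add_def] using this

@[simp]
theorem eval_translateAlgEquiv_symm (p y : σ → R) (G : MvPolynomial σ R) :
    eval y ((translateAlgEquiv p).symm G) = eval (y - p) G := by
  simpa using (eval_translateAlgEquiv p (y - p) ((translateAlgEquiv p).symm G)).symm

end Translation

section OrderOfVanishing

variable {σ 𝕜 : Type*} [Fintype σ] [NontriviallyNormedField 𝕜]

theorem X_pow_dvd_of_eval_isBigO {Q : Polynomial 𝕜} {N : ℕ}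
    (hQ : (fun t => Q.eval t) =O[𝓝[≠] 0] fun t => t ^ N) : Polynomial.X ^ N ∣ Q := by
  induction N generalizing Q with
  | zero => simp
  | succ N ih =>
    have tendsto_pow : Tendsto (fun t : 𝕜 => t ^ (N + 1)) (𝓝[≠] 0) (𝓝 0) := by
      simpa using ((continuous_pow (N + 1)).tendsto (0 : 𝕜)).mono_left nhdsWithin_le_nhds
    have eval_zero : Q.eval 0 = 0 :=
      tendsto_nhds_unique ((Q.continuous.tendsto 0).mono_left nhdsWithin_le_nhds)
        (hQ.trans_tendsto tendsto_pow)
    obtain ⟨R, rfl⟩ : Polynomial.X ∣ Q := by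
      rwa [Polynomial.X_dvd_iff, Polynomial.coeff_zero_eq_eval_zero]
    rw [pow_succ']
    refine mul_dvd_mul_left _ (ih ?_)
    refine ((isBigO_refl (fun t : 𝕜 => t⁻¹) (𝓝[≠] 0)).mul hQ).congr' ?_ ?_ <;>
      filter_upwards [self_mem_nhdsWithin] with t (ht : t ≠ 0)
    · simp [ht]
    · rw [pow_succ', inv_mul_cancel_left₀ ht]

theorem mem_pow_idealOfVars_of_eval_isBigO {P : MvPolynomial σ 𝕜} {N : ℕ}
    (hP : (fun y => eval y P) =O[𝓝 0] fun y => ‖y‖ ^ N) : P ∈ idealOfVars σ 𝕜 ^ N := by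
  have component_eq_zero (k : ℕ) (hk : k < N) : homogeneousComponent k P = 0 := by
    refine MvPolynomial.funext fun v => ?_
    let Q := aeval ((Polynomial.X : Polynomial 𝕜) • fun i => Polynomial.C (v i)) P
    have eval_Q (t : 𝕜) : Q.eval t = eval (t • v) P := by
      have := comp_aeval_apply ((Polynomial.X : Polynomial 𝕜) • fun i => Polynomial.C (v i))
        (Polynomial.aeval t) P
      simpa [Q, aeval_eq_eval, Function.comp_def, Pi.smul_def, mul_comm t] using this
    have tendsto_line : Tendsto (fun t : 𝕜 => t • v) (𝓝[≠] 0) (𝓝 0) := by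
      have : Continuous fun t : 𝕜 => t • v := by fun_prop
      simpa using (this.tendsto 0).mono_left nhdsWithin_le_nhds
    have hQ : (fun t => Q.eval t) =O[𝓝[≠] 0] fun t => t ^ N := by
      simp only [eval_Q]
      refine (hP.comp_tendsto tendsto_line).trans (.of_bound (‖v‖ ^ N) (.of_forall fun t => ?_))
      simp [norm_smul, mul_pow, mul_comm]
    rw [← coeff_aeval_X_smul_C, map_zero]
    exact Polynomial.X_pow_dvd_iff.mp (X_pow_dvd_of_eval_isBigO hQ) k hk
  rw [mem_pow_idealOfVars_iff']
  intro s hs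
  simpa [coeff_homogeneousComponent] using congrArg (coeff s) (component_eq_zero _ hs)

end OrderOfVanishing

section Taylor

variable {σ : Type*}

theorem exists_eval_eq_multilinearMap_diagonal [Finite σ] {ι R : Type*} [Finite ι]
    [CommSemiring R] (M : MultilinearMap R (fun _ : ι => σ → R) R) :
    ∃ P : MvPolynomial σ R, ∀ y, eval y P = M fun _ => y := by
  classical
  cases nonempty_fintype σ
  cases nonempty_fintype ι
  refine ⟨∑ r : ι → σ, C (M fun j => Pi.single (r j) 1) * ∏ j, X (r j), fun y => ?_⟩
  conv_rhs => rw [pi_eq_sum_univ' y]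
  simp [MultilinearMap.map_sum, MultilinearMap.map_smul_univ, mul_comm]

theorem exists_sub_eval_isBigO_of_analyticAt [Fintype σ] {𝕜 : Type*}
    [NontriviallyNormedField 𝕜] {u : (σ → 𝕜) → 𝕜} (hu : AnalyticAt 𝕜 u 0) (N : ℕ) :
    ∃ P : MvPolynomial σ 𝕜, (fun y => u y - eval y P) =O[𝓝 0] fun y => ‖y‖ ^ N := by
  obtain ⟨p, hp⟩ := hu
  choose P hP using fun k => exists_eval_eq_multilinearMap_diagonal (p k).toMultilinearMap
  refine ⟨∑ k ∈ Finset.range N, P k, ?_⟩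
  simpa [FormalMultilinearSeries.partialSum, hP] using hp.isBigO_sub_partialSum_pow N

end Taylor

section Syzygies

theorem exists_syzygy_sub_mem_pow {R M ι : Type*} [CommRing R] [IsNoetherianRing R]
    [AddCommGroup M] [Module R M] [Module.Finite R M] [Fintype ι] (I : Ideal R) (F : ι → M) :
    ∃ k, ∀ (s : ℕ) (P : ι → R), ∑ i, P i • F i ∈ I ^ (k + s) • (⊤ : Submodule R M) →
      ∃ a : ι → R, ∑ i, a i • F i = 0 ∧ ∀ i, P i - a i ∈ I ^ s := by
  obtain ⟨k, artin_rees⟩ := I.exists_pow_inf_eq_pow_smul (Submodule.span R (Set.range F))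
  refine ⟨k, fun s P hP => ?_⟩
  have mem_span : ∑ i, P i • F i ∈ Submodule.span R (Set.range F) :=
    Submodule.sum_smul_mem _ P fun i _ => Submodule.subset_span ⟨i, rfl⟩
  have mem_smul_span : ∑ i, P i • F i ∈ I ^ s • Submodule.span R (Set.range F) := by
    have mem_inf := Submodule.mem_inf.mpr ⟨hP, mem_span⟩
    rw [artin_rees _ (k.le_add_right s), Nat.add_sub_cancel_left] at mem_inf
    exact Submodule.smul_mono le_rfl inf_le_right mem_inf
  obtain ⟨c, hc, sum_c⟩ := (Submodule.mem_ideal_smul_span_iff_exists_sum _ F _).mp mem_smul_span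
  rw [Finsupp.sum_fintype _ _ (by simp)] at sum_c
  exact ⟨fun i => P i - c i, by simp [sub_smul, sum_c], fun i => by simpa using hc i⟩

variable {σ ι 𝕜 : Type*} [Fintype σ] [Fintype ι] [NontriviallyNormedField 𝕜]

theorem exists_polynomial_syzygy_of_analyticAt_zero (F : ι → MvPolynomial σ 𝕜)
    {u : ι → (σ → 𝕜) → 𝕜} (hu : ∀ i, AnalyticAt 𝕜 (u i) 0)
    (hF : ∀ᶠ y in 𝓝 0, ∑ i, u i y * eval y (F i) = 0) :
    ∃ a : ι → MvPolynomial σ 𝕜, ∑ i, a i * F i = 0 ∧ ∀ i, eval 0 (a i) = u i 0 := by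
  obtain ⟨k, hk⟩ := exists_syzygy_sub_mem_pow (idealOfVars σ 𝕜) F
  choose P hP using fun i => exists_sub_eval_isBigO_of_analyticAt (hu i) (k + 1)
  have sum_isBigO : (fun y => eval y (∑ i, P i * F i)) =O[𝓝 0] fun y => ‖y‖ ^ (k + 1) := by
    have error_isBigO : (fun y => ∑ i, (u i y - eval y (P i)) * eval y (F i)) =O[𝓝 0]
        fun y => ‖y‖ ^ (k + 1) := by
      refine .fun_sum fun i _ => ?_
      simpa using (hP i).mul (((continuous_eval (F i)).tendsto 0).isBigO_one ℝ)
    refine error_isBigO.neg_left.congr' ?_ .rfl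
    filter_upwards [hF] with y hy
    simp [sub_mul, hy]
  obtain ⟨a, ha, ha_sub⟩ := hk 1 P (by
    simpa using mem_pow_idealOfVars_of_eval_isBigO sum_isBigO)
  refine ⟨a, ha, fun i => ?_⟩
  have eval_a : eval 0 (P i) = eval 0 (a i) := by
    have := (mem_pow_idealOfVars_iff' 1 _).mp (ha_sub i) 0 (by simp)
    rwa [← constantCoeff_eq, ← eval_zero, map_sub, sub_eq_zero] at this
  have eval_P : u i 0 = eval 0 (P i) :=
    sub_eq_zero.mp ((hP i).eq_zero_imp.self_of_nhds (by simp))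
  rw [eval_P, eval_a]

theorem exists_polynomial_syzygy_of_analyticAt (F : ι → MvPolynomial σ 𝕜) {p : σ → 𝕜}
    {u : ι → (σ → 𝕜) → 𝕜} (hu : ∀ i, AnalyticAt 𝕜 (u i) p)
    (hF : ∀ᶠ x in 𝓝 p, ∑ i, u i x * eval x (F i) = 0) :
    ∃ a : ι → MvPolynomial σ 𝕜, ∑ i, a i * F i = 0 ∧ ∀ i, eval p (a i) = u i p := by
  have analyticAt_add : AnalyticAt 𝕜 (fun y : σ → 𝕜 => y + p) 0 := by fun_prop
  have tendsto_add : Tendsto (fun y : σ → 𝕜 => y + p) (𝓝 0) (𝓝 p) := by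
    simpa using analyticAt_add.continuousAt.tendsto
  obtain ⟨a, ha, ha_eval⟩ := exists_polynomial_syzygy_of_analyticAt_zero
    (fun i => translateAlgEquiv p (F i)) (u := fun i y => u i (y + p))
    (fun i => (hu i).comp_of_eq analyticAt_add (zero_add p)) (by
      simpa using tendsto_add.eventually hF)
  refine ⟨fun i => (translateAlgEquiv p).symm (a i), ?_, fun i => by simpa using ha_eval i⟩
  simpa using congrArg (translateAlgEquiv p).symm ha

end Syzygies

section Duality

theorem mem_submodule_iff_forall_dotProduct {ι K : Type*} [Fintype ι] [Field K]
    (W : Submodule K (ι → K)) (v : ι → K) :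
    v ∈ W ↔ ∀ y, (∀ w ∈ W, w ⬝ᵥ y = 0) → v ⬝ᵥ y = 0 := by
  classical
  rw [← Subspace.forall_mem_dualAnnihilator_apply_eq_zero_iff,
    (dotProductEquiv K ι).surjective.forall]
  simp [Submodule.mem_dualAnnihilator, dotProduct_comm]

theorem mem_evSyz_iff_forall_sum_eq_zero {n : ℕ} {f : MvPolynomial (Fin (n + 1)) ℂ}
    {p v : Fin (n + 1) → ℂ} :
    v ∈ evSyz n f p ↔
      ∀ y : Fin (n + 1) → ℂ, (∀ a ∈ syzSet n f, ∑ i, eval p (a i) * y i = 0) →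
        ∑ i, v i * y i = 0 := by
  let W : Submodule ℂ (Fin (n + 1) → ℂ) :=
    ((LinearMap.ker (Fintype.linearCombination (MvPolynomial (Fin (n + 1)) ℂ)
      fun i => pderiv i f)).restrictScalars ℂ).map ((aeval p).toLinearMap.compLeft (Fin (n + 1)))
  have mem_W (w : Fin (n + 1) → ℂ) : w ∈ W ↔ w ∈ evSyz n f p := Iff.rfl
  rw [← mem_W, mem_submodule_iff_forall_dotProduct]
  simp [mem_W, evSyz, dotProduct]

end Duality

section Dehomogenization

variable {n d : ℕ} {f : MvPolynomial (Fin (n + 1)) ℂ}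

theorem eval_dehom (f : MvPolynomial (Fin (n + 1)) ℂ) (y : Fin n → ℂ) :
    eval y (dehom n f) = eval (Fin.cons 1 y : Fin (n + 1) → ℂ) f := by
  have eval_cons : (Fin.cons 1 y : Fin (n + 1) → ℂ) = fun i =>
      eval y ((Fin.cons 1 fun j => X j : Fin (n + 1) → MvPolynomial (Fin n) ℂ) i) := by
    ext i
    cases i using Fin.cases <;> simp
  rw [eval_cons]
  exact comp_aeval_apply _ (aeval y) f

theorem pderiv_dehom (f : MvPolynomial (Fin (n + 1)) ℂ) (i : Fin n) :
    pderiv i (dehom n f) = dehom n (pderiv i.succ f) := by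
  unfold dehom
  induction f using MvPolynomial.induction_on with
  | C a => simp
  | add P Q hP hQ => simp only [map_add, hP, hQ]
  | mul_X P j hP =>
    rw [map_mul, Derivation.leibniz, Derivation.leibniz, hP, map_add, aeval_X]
    simp only [smul_eq_mul, map_mul, aeval_X]
    congr 2
    refine Fin.cases ?_ (fun k => ?_) j
    · simp [pderiv_X, (Fin.succ_ne_zero i).symm]
    · by_cases hk : k = i <;> simp [pderiv_X, hk]

theorem sum_mul_eval_pderiv_cons_one (hf : f.IsHomogeneous d) (c : Fin (n + 1) → ℂ)
    (y : Fin n → ℂ) :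
    ∑ i, c i * eval (Fin.cons 1 y : Fin (n + 1) → ℂ) (pderiv i f) =
      c 0 * (d * eval y (dehom n f)) +
        ∑ i : Fin n, (c i.succ - c 0 * y i) * eval y (pderiv i (dehom n f)) := by
  have euler := congrArg (eval (Fin.cons 1 y : Fin (n + 1) → ℂ)) hf.sum_X_mul_pderiv
  simp only [Fin.sum_univ_succ, map_add, map_sum, map_mul, eval_X, Fin.cons_zero, Fin.cons_succ,
    one_mul, nsmul_eq_mul, map_natCast] at euler
  simp only [pderiv_dehom, eval_dehom, Fin.sum_univ_succ, ← euler, sub_mul,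
    Finset.sum_sub_distrib, mul_assoc, ← Finset.mul_sum]
  ring

end Dehomogenization

section AffineChart

variable {n : ℕ} {𝕜 : Type*}

/-- The coordinates `(x₁ / x₀, …, xₙ / x₀)` of the point `[x]` in the standard affine chart
`x₀ ≠ 0` of projective space. -/
def affineChart [Field 𝕜] (x : Fin (n + 1) → 𝕜) : Fin n → 𝕜 :=
  fun i => x i.succ / x 0

theorem smul_cons_one_affineChart [Field 𝕜] {x : Fin (n + 1) → 𝕜} (hx : x 0 ≠ 0) :
    x 0 • (Fin.cons 1 (affineChart x) : Fin (n + 1) → 𝕜) = x := by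
  ext i
  cases i using Fin.cases <;> simp [affineChart, mul_div_cancel₀, hx]

theorem analyticAt_affineChart [NontriviallyNormedField 𝕜] {x : Fin (n + 1) → 𝕜}
    (hx : x 0 ≠ 0) : AnalyticAt 𝕜 affineChart x :=
  .pi fun i =>
    (analyticAt_pi_iff.mp analyticAt_id i.succ).div (analyticAt_pi_iff.mp analyticAt_id 0) hx

end AffineChart

section StrongEulerHomogeneity

variable {n d : ℕ} {f : MvPolynomial (Fin (n + 1)) ℂ} {p : Fin (n + 1) → ℂ}

theorem StronglyEulerHomogeneousAt.mem_evSyz (h : StronglyEulerHomogeneousAt n f p)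
    (hf : f.IsHomogeneous d) (hp : p 0 = 1) : p ∈ evSyz n f p := by
  obtain ⟨U, b, hU, hpU, hb, hbp, hg⟩ := h
  have hp_ne : p 0 ≠ 0 := by simp [hp]
  have chart_p : affineChart p = fun i => p i.succ := by
    ext; simp [affineChart, hp]
  let c (i : Fin (n + 1)) (y : Fin n → ℂ) : ℂ :=
    Fin.cases 1 (fun j => y j - d * b j y) i
  have analyticAt_c (i : Fin (n + 1)) : AnalyticAt ℂ (c i) (affineChart p) := by
    cases i using Fin.cases with
    | zero => exact analyticAt_const
    | succ j =>
      exact (analyticAt_pi_iff.mp analyticAt_id j).sub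
        (analyticAt_const.mul (hb j _ (chart_p ▸ hpU)))
  have eventually_syzygy : ∀ᶠ x in 𝓝 p, ∑ i, c i (affineChart x) * eval x (pderiv i f) = 0 := by
    have eventually_ne : ∀ᶠ x : Fin (n + 1) → ℂ in 𝓝 p, x 0 ≠ 0 :=
      (continuous_apply 0).continuousAt.eventually_ne hp_ne
    have eventually_mem : ∀ᶠ x in 𝓝 p, affineChart x ∈ U :=
      (analyticAt_affineChart hp_ne).continuousAt (hU.mem_nhds (chart_p ▸ hpU))
    filter_upwards [eventually_ne, eventually_mem] with x hx hxU
    have eval_pderiv (i : Fin (n + 1)) : eval x (pderiv i f) =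
        x 0 ^ (d - 1) * eval (Fin.cons 1 (affineChart x) : Fin (n + 1) → ℂ) (pderiv i f) := by
      conv_lhs => rw [← smul_cons_one_affineChart hx]
      exact aeval_smul_of_isHomogeneous hf.pderiv _ _
    simp only [eval_pderiv, mul_left_comm, ← Finset.mul_sum, sum_mul_eval_pderiv_cons_one hf]
    simp [c, hg _ hxU, Finset.mul_sum, mul_assoc]
  obtain ⟨a, ha, ha_eval⟩ := exists_polynomial_syzygy_of_analyticAt (fun i => pderiv i f)
    (fun i => (analyticAt_c i).comp (analyticAt_affineChart hp_ne)) eventually_syzygy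
  refine ⟨a, ha, funext fun i => ?_⟩
  cases i using Fin.cases <;> simp [ha_eval, c, chart_p, hp, hbp]

theorem eval_dehom_eq_sum_of_mem_syzSet (hd : d ≠ 0) (hf : f.IsHomogeneous d)
    {a : Fin (n + 1) → MvPolynomial (Fin (n + 1)) ℂ} (ha : a ∈ syzSet n f) {y : Fin n → ℂ}
    (hy : eval y (dehom n (a 0)) ≠ 0) :
    eval y (dehom n f) = ∑ i : Fin n,
      (d : ℂ)⁻¹ * (y i - eval y (dehom n (a i.succ)) / eval y (dehom n (a 0))) *
        eval y (pderiv i (dehom n f)) := by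
  let A (i : Fin (n + 1)) : ℂ := eval y (dehom n (a i))
  have A_ne_zero : A 0 ≠ 0 := hy
  have pairing : A 0 * (d * eval y (dehom n f)) +
      ∑ i : Fin n, (A i.succ - A 0 * y i) * eval y (pderiv i (dehom n f)) = 0 := by
    rw [← sum_mul_eval_pderiv_cons_one hf A y]
    simpa [A, eval_dehom] using congrArg (eval (Fin.cons 1 y : Fin (n + 1) → ℂ)) ha
  have d_ne_zero : (d : ℂ) ≠ 0 := Nat.cast_ne_zero.mpr hd
  calc eval y (dehom n f)
      = -(d * A 0)⁻¹ * ∑ i : Fin n, (A i.succ - A 0 * y i) * eval y (pderiv i (dehom n f)) := by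
        rw [eq_neg_of_add_eq_zero_right pairing]
        field_simp
    _ = ∑ i : Fin n, (d : ℂ)⁻¹ * (y i - A i.succ / A 0) * eval y (pderiv i (dehom n f)) := by
        rw [Finset.mul_sum]
        refine Finset.sum_congr rfl fun i _ => ?_
        field_simp
        ring

theorem stronglyEulerHomogeneousAt_of_mem_evSyz (hd : d ≠ 0) (hf : f.IsHomogeneous d)
    (hp : p 0 = 1) (h : p ∈ evSyz n f p) : StronglyEulerHomogeneousAt n f p := by
  obtain ⟨a, ha, hap⟩ := h
  let q : Fin n → ℂ := fun i => p i.succ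
  have eval_dehom_a (i : Fin (n + 1)) : eval q (dehom n (a i)) = p i := by
    have cons_q : (Fin.cons 1 q : Fin (n + 1) → ℂ) = p := by
      rw [← hp]
      exact Fin.cons_self_tail p
    rw [eval_dehom, cons_q]
    exact congrFun hap i
  have analyticAt_eval (G : MvPolynomial (Fin n) ℂ) (y : Fin n → ℂ) :
      AnalyticAt ℂ (fun y => eval y G) y :=
    AnalyticOnNhd.eval_mvPolynomial G y (Set.mem_univ y)
  refine ⟨{y | eval y (dehom n (a 0)) ≠ 0},
    fun i y => (d : ℂ)⁻¹ * (y i - eval y (dehom n (a i.succ)) / eval y (dehom n (a 0))),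
    isOpen_ne_fun (continuous_eval _) continuous_const, ?_, fun i y hy => ?_, fun i => ?_,
    fun y hy => eval_dehom_eq_sum_of_mem_syzSet hd hf ha hy⟩
  · change eval q _ ≠ 0
    simp [eval_dehom_a, hp]
  · exact analyticAt_const.mul ((analyticAt_pi_iff.mp analyticAt_id i).sub
      ((analyticAt_eval _ y).div (analyticAt_eval _ y) hy))
  · change (d : ℂ)⁻¹ * (q i - eval q _ / eval q _) = 0
    simp [eval_dehom_a, hp, q]

theorem stronglyEulerHomogeneousAt_iff_mem_evSyz (hd : d ≠ 0) (hf : f.IsHomogeneous d)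
    (hp : p 0 = 1) : StronglyEulerHomogeneousAt n f p ↔ p ∈ evSyz n f p :=
  ⟨fun h => h.mem_evSyz hf hp, stronglyEulerHomogeneousAt_of_mem_evSyz hd hf hp⟩

end StrongEulerHomogeneity

theorem strongly_euler_homogeneous_iff_fiber_in_incidence_general (n d : ℕ) (hd : 1 ≤ d)
    (f : MvPolynomial (Fin (n + 1)) ℂ) (hhom : f.IsHomogeneous d)
    (p : Fin (n + 1) → ℂ) (hp0 : p 0 = 1) :
    StronglyEulerHomogeneousAt n f p ↔
      ∀ y : Fin (n + 1) → ℂ,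
        (∀ a ∈ syzSet n f, ∑ i, eval p (a i) * y i = 0) → ∑ i, p i * y i = 0 :=
  (stronglyEulerHomogeneousAt_iff_mem_evSyz (Nat.one_le_iff_ne_zero.mp hd) hhom hp0).trans
    mem_evSyz_iff_forall_sum_eq_zero

/-- **Incidence criterion for strong Euler homogeneity.** `D = V(f)` is strongly Euler
homogeneous at `p` iff every vector `y` annihilated by all evaluated Jacobian syzygies at `p`
(i.e. every point of the fiber of `Z_f` over `p`) satisfies `∑ p_i y_i = 0` (lies on the
incidence variety `I`). -/
theorem strongly_euler_homogeneous_iff_fiber_in_incidence (n d : ℕ) (hn : 1 ≤ n) (hd : 1 ≤ d)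
    (f : MvPolynomial (Fin (n + 1)) ℂ) (hsf : Squarefree f) (hhom : f.IsHomogeneous d)
    (p : Fin (n + 1) → ℂ) (hp0 : p 0 = 1) (hpf : eval p f = 0) :
    StronglyEulerHomogeneousAt n f p ↔
      ∀ y : Fin (n + 1) → ℂ,
        (∀ a ∈ syzSet n f, ∑ i, eval p (a i) * y i = 0) → ∑ i, p i * y i = 0 :=
  strongly_euler_homogeneous_iff_fiber_in_incidence_general n d hd f hhom p hp0

end
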